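/- arXiv:2305.03676 — 5 statements merged into one kernel-verified Lean document; each statement's English description precedes it below -/
import Mathlib

section
/- Fix R₀ ≥ 0 and for t ≥ 0 set Λ(t) := L((t − R₀)⁺) and R(t) := S(Λ(t)) + R₀ − t. Then for all t, s ≥ 0, Λ(t+s) − Λ(t) = inf{ r > 0 : S(r + Λ(t)) − S(Λ(t)) > s − R(t) }. Equivalently, Λ(t+s) − Λ(t) = L̃((s − R(t))⁺), where L̃ is the inverse of the shifted function S̃(r) := S(r + Λ(t)) − S(Λ(t)), i.e. L̃(u) := inf{r > 0 : S̃(r) > u}. -/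
/-!
For `r > 0` the drift gives `S (r + Λ t) > S (Λ t) ≥ 0`, so with `u = (t + s - R₀)⁺` both conditions
in the claim are equivalent to `u < S (r + Λ t)`. It remains to see that the infimum of
`{r > 0 : u < S (r + c)}` is `L u - c` for `c = Λ t = L v`, `v = (t - R₀)⁺ ≤ u`: this set is the
translate by `-c` of `{r > 0 : u < S r}`, whose elements are all at least `c`, except that the
point `c` itself may be lost. The loss does not matter because `{r > 0 : u < S r}` is upward closed
(`isGLB_shift`).
-/

/-- Translating an upper level set by a lower bound `c` of it translates its infimum, even though
the translated set omits the point `0`. -/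
lemma isGLB_shift (S : ℝ → ℝ) (u c : ℝ) (hc : 0 ≤ c)
    (hSmono : ∀ ⦃a b : ℝ⦄, 0 ≤ a → a ≤ b → S a ≤ S b)
    (hne : {r : ℝ | 0 < r ∧ u < S r}.Nonempty)
    (hlb : ∀ r : ℝ, 0 < r → u < S r → c ≤ r) :
    IsGLB {r : ℝ | 0 < r ∧ u < S (r + c)} (sInf {r : ℝ | 0 < r ∧ u < S r} - c) := by
  constructor
  · rintro r ⟨hr, hu⟩
    have : sInf {r : ℝ | 0 < r ∧ u < S r} ≤ r + c :=
      csInf_le ⟨0, fun x hx => hx.1.le⟩ ⟨by linarith, hu⟩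
    linarith
  · intro b hb
    have : b + c ≤ sInf {r : ℝ | 0 < r ∧ u < S r} := by
      refine le_csInf hne ?_
      rintro a ⟨ha, hu⟩
      -- `a - c` may vanish, so `a + ε` is used in place of `a`.
      refine le_of_forall_pos_le_add fun ε hε => ?_
      have hca := hlb a ha hu
      have hmem : a + ε - c ∈ {r : ℝ | 0 < r ∧ u < S (r + c)} := by
        refine ⟨by linarith, ?_⟩
        rw [sub_add_cancel]
        exact hu.trans_le (hSmono ha.le (by linarith))
      have := hb hmem
      linarith
    linarith

/-- Fix `R₀ ≥ 0`, set `Λ t = L ((t - R₀)⁺)` and `R t = S (Λ t) + R₀ - t`.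
Then for all `t, s ≥ 0`,
`Λ (t+s) - Λ t = inf {r > 0 : S (r + Λ t) - S (Λ t) > s - R t}`;
equivalently `Λ (t+s) - Λ t = L̃ ((s - R t)⁺)` where `L̃` is the inverse of the
shifted path `S̃ r = S (r + Λ t) - S (Λ t)`. -/
theorem inverse_subordinator_shift_identity
    (κ : ℝ) (S L : ℝ → ℝ)
    (hκ : 0 < κ)
    (hS0 : S 0 = 0)
    (hSmono : ∀ ⦃a b : ℝ⦄, 0 ≤ a → a ≤ b → S a ≤ S b)
    (hSrc : ∀ a : ℝ, 0 ≤ a → ContinuousWithinAt S (Set.Ici a) a)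
    (hdrift : ∀ ⦃a b : ℝ⦄, 0 ≤ a → a ≤ b → κ * (b - a) ≤ S b - S a)
    (hL : ∀ t : ℝ, L t = sInf {r : ℝ | 0 < r ∧ t < S r})
    (R₀ : ℝ) (hR₀ : 0 ≤ R₀)
    (Λ R : ℝ → ℝ)
    (hΛ : ∀ t : ℝ, Λ t = L (max (t - R₀) 0))
    (hR : ∀ t : ℝ, R t = S (Λ t) + R₀ - t) :
    ∀ t : ℝ, 0 ≤ t → ∀ s : ℝ, 0 ≤ s →
      Λ (t + s) - Λ t = sInf {r : ℝ | 0 < r ∧ s - R t < S (r + Λ t) - S (Λ t)} ∧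
      Λ (t + s) - Λ t
        = sInf {r : ℝ | 0 < r ∧ max (s - R t) 0 < S (r + Λ t) - S (Λ t)} := by
  intro t _ s hs
  have hbdd : ∀ u : ℝ, BddBelow {r : ℝ | 0 < r ∧ u < S r} := fun u => ⟨0, fun x hx => hx.1.le⟩
  have hΛ0 : 0 ≤ Λ t := by
    rw [hΛ, hL]
    exact Real.sInf_nonneg fun x hx => hx.1.le
  have hSΛ : 0 ≤ S (Λ t) := hS0 ▸ hSmono le_rfl hΛ0
  have hvu : max (t - R₀) 0 ≤ max (t + s - R₀) 0 := max_le_max (by linarith) le_rfl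
  have hne : {r : ℝ | 0 < r ∧ max (t + s - R₀) 0 < S r}.Nonempty := by
    have hu : 0 ≤ max (t + s - R₀) 0 := le_max_right _ _
    have hpos : 0 < (max (t + s - R₀) 0 + 1) / κ := by positivity
    refine ⟨(max (t + s - R₀) 0 + 1) / κ, hpos, ?_⟩
    have h := hdrift le_rfl hpos.le
    rw [sub_zero, hS0, sub_zero, mul_div_cancel₀ _ hκ.ne'] at h
    linarith
  have hlb : ∀ r : ℝ, 0 < r → max (t + s - R₀) 0 < S r → Λ t ≤ r := by
    intro r hr hu
    rw [hΛ, hL]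
    exact csInf_le (hbdd _) ⟨hr, hvu.trans_lt hu⟩
  have hglb := isGLB_shift S _ (Λ t) hΛ0 hSmono hne hlb
  rw [← hL, ← hΛ] at hglb
  have hinc : ∀ r : ℝ, 0 < r → S (Λ t) < S (r + Λ t) := by
    intro r hr
    have h := hdrift hΛ0 (show Λ t ≤ r + Λ t by linarith)
    have : 0 < κ * (r + Λ t - Λ t) := mul_pos hκ (by linarith)
    linarith
  have h1 : {r : ℝ | 0 < r ∧ s - R t < S (r + Λ t) - S (Λ t)}
      = {r : ℝ | 0 < r ∧ max (t + s - R₀) 0 < S (r + Λ t)} := by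
    ext r
    refine and_congr_right fun hr => ?_
    have := hinc r hr
    rw [hR, max_lt_iff]
    exact ⟨fun h => ⟨by linarith, by linarith⟩, fun h => by linarith [h.1]⟩
  have h2 : {r : ℝ | 0 < r ∧ max (s - R t) 0 < S (r + Λ t) - S (Λ t)}
      = {r : ℝ | 0 < r ∧ s - R t < S (r + Λ t) - S (Λ t)} := by
    ext r
    refine and_congr_right fun hr => ?_
    rw [max_lt_iff]
    exact and_iff_left (sub_pos.2 (hinc r hr))
  have hne' : {r : ℝ | 0 < r ∧ max (t + s - R₀) 0 < S (r + Λ t)}.Nonempty := by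
    obtain ⟨r, hr, hu⟩ := hne
    exact ⟨r, hr, hu.trans_le (hSmono hr.le (by linarith))⟩
  rw [h2, h1]
  exact ⟨(hglb.csInf_eq hne').symm, (hglb.csInf_eq hne').symm⟩
end

section
/- Fix R₀ ≥ 0 and for t ≥ 0 set R(t) := S(L((t − R₀)⁺)) + R₀ − t. If t ≥ 0 satisfies R(t) > 0, then the map v ↦ L((v − R₀)⁺) is constant on the interval [t, t + R(t)); in particular its right derivative at t exists and equals 0. -/
/-!
Write `s = (t - R₀)⁺`, `w = (v - R₀)⁺` and `ℓ = L s`. For `t ≤ v` the superlevel set defining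
`L w` is contained in the one defining `L s`, so `L s ≤ L w` once the former is nonempty.
Now `v < t + R t` says exactly `v - R₀ < S ℓ`; if `w > 0`, then `S ℓ > w > 0 = S 0`
forces `ℓ > 0`, so `ℓ` itself belongs to the set defining `L w`: that set is
nonempty and `L w ≤ ℓ`. If `w = 0`, then
`s = w = 0` and there is nothing to prove. The derivative statement follows because the map is
constant on a right neighbourhood of `t`.
-/

/-- Fix `R₀ ≥ 0` and set `R t = S (L ((t - R₀)⁺)) + R₀ - t`.  If `t ≥ 0` satisfies
`R t > 0`, then `v ↦ L ((v - R₀)⁺)` is constant on `[t, t + R t)`; in particular its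
right derivative at `t` exists and equals `0`. -/
theorem inverse_subordinator_frozen_during_overshoot
    (κ : ℝ) (S L : ℝ → ℝ)
    (hκ : 0 < κ)
    (hS0 : S 0 = 0)
    (hSmono : ∀ ⦃a b : ℝ⦄, 0 ≤ a → a ≤ b → S a ≤ S b)
    (hSrc : ∀ a : ℝ, 0 ≤ a → ContinuousWithinAt S (Set.Ici a) a)
    (hdrift : ∀ ⦃a b : ℝ⦄, 0 ≤ a → a ≤ b → κ * (b - a) ≤ S b - S a)
    (hL : ∀ t : ℝ, L t = sInf {r : ℝ | 0 < r ∧ t < S r})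
    (R₀ : ℝ) (hR₀ : 0 ≤ R₀)
    (R : ℝ → ℝ)
    (hR : ∀ t : ℝ, R t = S (L (max (t - R₀) 0)) + R₀ - t) :
    ∀ t : ℝ, 0 ≤ t → 0 < R t →
      (∀ v : ℝ, t ≤ v → v < t + R t →
        L (max (v - R₀) 0) = L (max (t - R₀) 0)) ∧
      HasDerivWithinAt (fun v : ℝ => L (max (v - R₀) 0)) 0 (Set.Ici t) t := by
  intro t _ hRt
  have hconst : ∀ v : ℝ, t ≤ v → v < t + R t →
      L (max (v - R₀) 0) = L (max (t - R₀) 0) := by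
    intro v htv hv
    have hvS : v - R₀ < S (L (max (t - R₀) 0)) := by
      rw [hR t] at hv
      linarith
    have hsw : max (t - R₀) 0 ≤ max (v - R₀) 0 := max_le_max (by linarith) le_rfl
    have hs0 : 0 ≤ max (t - R₀) 0 := le_max_right _ _
    rcases le_or_gt (v - R₀) 0 with hv0 | hv0
    · rw [max_eq_right hv0, max_eq_right (by linarith : t - R₀ ≤ 0)]
    have hw : max (v - R₀) 0 = v - R₀ := max_eq_left hv0.le
    rw [hw] at hsw ⊢
    generalize max (t - R₀) 0 = s at *
    generalize v - R₀ = w at *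
    have hbdd : ∀ u : ℝ, BddBelow {r : ℝ | 0 < r ∧ u < S r} :=
      fun u => ⟨0, fun r hr => hr.1.le⟩
    have hℓ0 : 0 ≤ L s := by
      rw [hL s]
      exact Real.sInf_nonneg fun r hr => hr.1.le
    have hℓpos : 0 < L s := by
      refine lt_of_le_of_ne hℓ0 fun h => ?_
      rw [← h, hS0] at hvS
      linarith
    refine le_antisymm ?_ ?_
    · rw [hL w]
      exact csInf_le (hbdd w) ⟨hℓpos, hvS⟩
    · rw [hL s, hL w]
      exact csInf_le_csInf (hbdd s) ⟨L s, hℓpos, hvS⟩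
        fun r hr => ⟨hr.1, hsw.trans_lt hr.2⟩
  refine ⟨hconst, ?_⟩
  refine (hasDerivWithinAt_const t (Set.Ici t) (L (max (t - R₀) 0))).congr_of_eventuallyEq ?_ rfl
  filter_upwards [self_mem_nhdsWithin,
    mem_nhdsWithin_of_mem_nhds (Iio_mem_nhds (by linarith : t < t + R t))] with v hv1 hv2
  exact hconst v hv1 hv2
end

section
/- Let B : [0,∞) → ℝ be any function, x₀ ∈ ℝ, R₀ ≥ 0, and define X(t) := x₀ + B(L((t − R₀)⁺)) and R(t) := S(L((t − R₀)⁺)) + R₀ − t for t ≥ 0. Fix t ≥ 0 and set Λ := L((t − R₀)⁺), S̃(r) := S(r + Λ) − S(Λ), B̃(r) := B(r + Λ) − B(Λ), and L̃(u) := inf{r > 0 : S̃(r) > u}. Then for every s ≥ 0: X(t + s) = X(t) + B̃(L̃((s − R(t))⁺)) and R(t + s) = S̃(L̃((s − R(t))⁺)) + R(t) − s. -/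
/-!
The identity reduces to the additivity `L (t + s - R₀)⁺ = Λ + L̃ (s - R t)⁺` of first-passage times.
Since `s - R t = t + s - R₀ - S Λ` and `S` is strictly increasing on `[0, ∞)`, for `r > 0` the
condition `(s - R t)⁺ < S̃ r` says exactly that `S (r + Λ) > (t + s - R₀)⁺`. Hence `Λ + L̃` is the
infimum of the set defining `L (t + s - R₀)⁺` restricted to `(Λ, ∞)`. As the level has increased
from time `t`, that set is already contained in `[Λ, ∞)`, and since `S` is nondecreasing, discarding
the endpoint `Λ` does not change the infimum (`sInf_passage_shift`).
-/

/-- First passage above level `w` after a point `Λ` preceding every passage point: restarting at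
`Λ` gives the same infimum. -/
lemma sInf_passage_shift (S : ℝ → ℝ) (w Λ : ℝ) (hΛ : 0 ≤ Λ)
    (hSmono : ∀ ⦃a b : ℝ⦄, 0 ≤ a → a ≤ b → S a ≤ S b)
    (hne : ∃ r, 0 < r ∧ w < S r)
    (hlow : ∀ r, 0 < r → w < S r → Λ ≤ r) :
    sInf {r : ℝ | 0 < r ∧ w < S r} = sInf {r : ℝ | 0 < r ∧ w < S (r + Λ)} + Λ := by
  have hbdd : BddBelow {r : ℝ | 0 < r ∧ w < S r} := ⟨0, fun r hr => hr.1.le⟩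
  have hbdd' : BddBelow {r : ℝ | 0 < r ∧ w < S (r + Λ)} := ⟨0, fun r hr => hr.1.le⟩
  apply le_antisymm
  · rw [← sub_le_iff_le_add]
    obtain ⟨r, hr, hw⟩ := hne
    refine le_csInf ⟨r, hr, hw.trans_le (hSmono hr.le (by linarith))⟩ ?_
    rintro q ⟨hq, hwq⟩
    rw [sub_le_iff_le_add]
    exact csInf_le hbdd ⟨by linarith, hwq⟩
  · refine le_csInf hne ?_
    rintro r ⟨hr, hw⟩
    have hΛr := hlow r hr hw
    -- The point `r` may equal `Λ`, so it is approached from the right.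
    refine le_of_forall_pos_le_add fun ε hε => ?_
    have hmem : r + ε - Λ ∈ {r : ℝ | 0 < r ∧ w < S (r + Λ)} := by
      refine ⟨by linarith, hw.trans_le (hSmono hr.le (by linarith))⟩
    linarith [csInf_le hbdd' hmem]

/-- Pathwise Markov-type identity for the pair `(X, R)`:
the increment of `(X, R)` after time `t` is the same functional of the shifted pair
`(B̃, S̃)` started at `(X t, R t)`. -/
theorem subdiffusion_overshoot_shift_identity
    (κ : ℝ) (S L : ℝ → ℝ)
    (hκ : 0 < κ)
    (hS0 : S 0 = 0)
    (hSmono : ∀ ⦃a b : ℝ⦄, 0 ≤ a → a ≤ b → S a ≤ S b)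
    (hSrc : ∀ a : ℝ, 0 ≤ a → ContinuousWithinAt S (Set.Ici a) a)
    (hdrift : ∀ ⦃a b : ℝ⦄, 0 ≤ a → a ≤ b → κ * (b - a) ≤ S b - S a)
    (hL : ∀ t : ℝ, L t = sInf {r : ℝ | 0 < r ∧ t < S r})
    (B : ℝ → ℝ) (x₀ R₀ : ℝ) (hR₀ : 0 ≤ R₀)
    (X R : ℝ → ℝ)
    (hX : ∀ u : ℝ, X u = x₀ + B (L (max (u - R₀) 0)))
    (hR : ∀ u : ℝ, R u = S (L (max (u - R₀) 0)) + R₀ - u)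
    (t : ℝ) (ht : 0 ≤ t)
    (Λ : ℝ) (hΛ : Λ = L (max (t - R₀) 0))
    (Stil Btil Ltil : ℝ → ℝ)
    (hStil : ∀ r : ℝ, Stil r = S (r + Λ) - S Λ)
    (hBtil : ∀ r : ℝ, Btil r = B (r + Λ) - B Λ)
    (hLtil : ∀ u : ℝ, Ltil u = sInf {r : ℝ | 0 < r ∧ u < Stil r}) :
    ∀ s : ℝ, 0 ≤ s →
      X (t + s) = X t + Btil (Ltil (max (s - R t) 0)) ∧
      R (t + s) = Stil (Ltil (max (s - R t) 0)) + R t - s := by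
  intro s hs
  have hΛ0 : 0 ≤ Λ := by
    rw [hΛ, hL]
    exact Real.sInf_nonneg fun r hr => hr.1.le
  have hSΛ : 0 ≤ S Λ := hS0 ▸ hSmono le_rfl hΛ0
  have hRt : R t = S Λ + R₀ - t := by rw [hR, ← hΛ]
  have hne : ∃ r, 0 < r ∧ max (t + s - R₀) 0 < S r := by
    have hw : 0 ≤ max (t + s - R₀) 0 := le_max_right _ _
    have hr : 0 < max (t + s - R₀) 0 / κ + 1 := by positivity
    refine ⟨_, hr, ?_⟩
    have h := hdrift le_rfl hr.le
    have e : κ * (max (t + s - R₀) 0 / κ + 1 - 0) = max (t + s - R₀) 0 + κ := by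
      field_simp
      ring
    rw [e, hS0] at h
    linarith
  have hlow : ∀ r, 0 < r → max (t + s - R₀) 0 < S r → Λ ≤ r := by
    intro r hr hw
    rw [hΛ, hL]
    refine csInf_le ⟨0, fun q hq => hq.1.le⟩ ⟨hr, lt_of_le_of_lt ?_ hw⟩
    exact max_le_max (by linarith) le_rfl
  have hset : {r : ℝ | 0 < r ∧ max (s - R t) 0 < Stil r}
      = {r : ℝ | 0 < r ∧ max (t + s - R₀) 0 < S (r + Λ)} := by
    ext r
    simp only [Set.mem_setOf_eq, hStil, hRt, max_lt_iff]
    refine and_congr_right fun hr => ?_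
    have hd := hdrift hΛ0 (show Λ ≤ r + Λ by linarith)
    have hpos : 0 < κ * (r + Λ - Λ) := mul_pos hκ (by linarith)
    constructor <;> rintro ⟨h1, h2⟩ <;> constructor <;> linarith
  have key : L (max (t + s - R₀) 0) = Ltil (max (s - R t) 0) + Λ := by
    rw [hL, hLtil, hset]
    exact sInf_passage_shift S _ Λ hΛ0 hSmono hne hlow
  constructor
  · rw [hX, hX, key, hBtil, ← hΛ]
    ring
  · rw [hR (t + s), key, hStil, hRt]
    ring
end

section
/- Let x₀ ∈ ℝ and let a ∈ [0, T). Then c := 2(e^{−T} − x₀)/(e^{−2T} + 1) is the unique real number satisfying the matching equation c·e^{−a} = φ(a)·(e^{a}x₀ + (c/2)(e^{a} − e^{−a})) + ψ(a); in particular the solution c does not depend on a. -/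
/-! With `A = e^a` and `q = e^{-T}`, the difference of the two sides of the matching equation is
`A / (A² q² + 1) * (c (q² + 1) - 2 (q - x₀))`. The first factor is nonzero, so the matching equation
is equivalent to `c (q² + 1) = 2 (q - x₀)`, in which `a` no longer occurs and `q² + 1 > 0`. -/

/-- For `x₀ ∈ ℝ` and `a ∈ [0, T)`, `c = 2(e^{-T} - x₀)/(e^{-2T} + 1)` is the unique
real number satisfying the matching equation
`c e^{-a} = φ(a)(e^a x₀ + (c/2)(e^a - e^{-a})) + ψ(a)`;
in particular the solution does not depend on `a`. -/
theorem lq_matching_constant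
    (T : ℝ) (φ ψ : ℝ → ℝ)
    (hφ : ∀ t : ℝ, φ t = -2 / (Real.exp (2 * (t - T)) + 1))
    (hψ : ∀ t : ℝ, ψ t = 2 * Real.exp (t - T) / (Real.exp (2 * (t - T)) + 1))
    (x₀ a : ℝ) (ha : 0 ≤ a) (haT : a < T)
    (c : ℝ)
    (hc : c = 2 * (Real.exp (-T) - x₀) / (Real.exp (-2 * T) + 1)) :
    (c * Real.exp (-a)
        = φ a * (Real.exp a * x₀ + c / 2 * (Real.exp a - Real.exp (-a))) + ψ a) ∧
    (∀ c' : ℝ,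
      c' * Real.exp (-a)
          = φ a * (Real.exp a * x₀ + c' / 2 * (Real.exp a - Real.exp (-a))) + ψ a →
      c' = c) := by
  have hA : 0 < Real.exp a := Real.exp_pos a
  have hE : Real.exp (2 * (a - T)) = Real.exp a ^ 2 * Real.exp (-T) ^ 2 := by
    rw [← Real.exp_nat_mul, ← Real.exp_nat_mul, ← Real.exp_add]
    congr 1
    push_cast
    ring
  have hF : Real.exp (a - T) = Real.exp a * Real.exp (-T) := by
    rw [← Real.exp_add, sub_eq_add_neg]
  have hQ : Real.exp (-2 * T) = Real.exp (-T) ^ 2 := by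
    rw [← Real.exp_nat_mul]
    congr 1
    push_cast
    ring
  rw [hQ] at hc
  rw [hφ, hψ, hE, hF, Real.exp_neg a]
  generalize Real.exp a = A at *
  generalize Real.exp (-T) = q at *
  have hD : 0 < A ^ 2 * q ^ 2 + 1 := by positivity
  have hq : 0 < q ^ 2 + 1 := by positivity
  -- Clearing `A² q² + 1`, the terms `± d / A` cancel and a common factor `A` remains.
  have key : ∀ d : ℝ, d * A⁻¹ - (-2 / (A ^ 2 * q ^ 2 + 1) * (A * x₀ + d / 2 * (A - A⁻¹))
      + 2 * (A * q) / (A ^ 2 * q ^ 2 + 1))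
      = A / (A ^ 2 * q ^ 2 + 1) * (d * (q ^ 2 + 1) - 2 * (q - x₀)) := by
    intro d
    field_simp
    ring
  have hAD : A / (A ^ 2 * q ^ 2 + 1) ≠ 0 := (div_pos hA hD).ne'
  constructor
  · rw [← sub_eq_zero, key, hc, div_mul_cancel₀ _ hq.ne', sub_self, mul_zero]
  · intro d hd
    rw [← sub_eq_zero, key, mul_eq_zero, or_iff_right hAD, sub_eq_zero] at hd
    rw [hc, eq_div_iff hq.ne', hd]
end

section
/- Let x₀ ∈ ℝ, a ∈ [0, T), and c := 2(e^{−T} − x₀)/(e^{−2T} + 1). Define p(t) := c·e^{−t} and x̄(t) := e^{t}x₀ + (c/2)(e^{t} − e^{−t}). Then p′(t) = −p(t) and x̄′(t) = x̄(t) + p(t) for every t ∈ ℝ, x̄(0) = x₀, and the matching condition p(a) = φ(a)x̄(a) + ψ(a) holds. (Thus on the initial deterministic interval [0, a] the optimal control is ū(t) = p(t) = c·e^{−t} and the optimal state is x̄(t).) -/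
/-!
The two ODEs and the initial condition are direct computations. For the matching condition, write
`E = e^a` and `τ = e^{-T}`. After clearing the denominator `E²τ² + 1`, it becomes
`c E (τ² + 1) = 2 E (τ - x₀)`, which is the definition of `c` multiplied by `E (τ² + 1)`.
-/

/-- On the initial deterministic interval the optimal pair of the LQ problem is
`ū(t) = p(t) = c e^{-t}` with state `x̄(t) = e^t x₀ + (c/2)(e^t - e^{-t})`:
`p' = -p`, `x̄' = x̄ + p`, `x̄ 0 = x₀`, and the matching condition
`p a = φ(a) x̄(a) + ψ(a)` holds. -/
theorem lq_deterministic_interval_optimal_pair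
    (T : ℝ) (φ ψ : ℝ → ℝ)
    (hφ : ∀ t : ℝ, φ t = -2 / (Real.exp (2 * (t - T)) + 1))
    (hψ : ∀ t : ℝ, ψ t = 2 * Real.exp (t - T) / (Real.exp (2 * (t - T)) + 1))
    (x₀ a : ℝ) (ha : 0 ≤ a) (haT : a < T)
    (c : ℝ)
    (hc : c = 2 * (Real.exp (-T) - x₀) / (Real.exp (-2 * T) + 1))
    (p xbar : ℝ → ℝ)
    (hp : ∀ t : ℝ, p t = c * Real.exp (-t))
    (hx : ∀ t : ℝ, xbar t = Real.exp t * x₀ + c / 2 * (Real.exp t - Real.exp (-t))) :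
    (∀ t : ℝ, HasDerivAt p (-(p t)) t) ∧
    (∀ t : ℝ, HasDerivAt xbar (xbar t + p t) t) ∧
    xbar 0 = x₀ ∧
    p a = φ a * xbar a + ψ a := by
  have hneg (t : ℝ) : HasDerivAt (fun s : ℝ => Real.exp (-s)) (-Real.exp (-t)) t := by
    simpa using (hasDerivAt_neg t).exp
  obtain rfl : p = fun t => c * Real.exp (-t) := funext hp
  obtain rfl : xbar = fun t => Real.exp t * x₀ + c / 2 * (Real.exp t - Real.exp (-t)) :=
    funext hx
  refine ⟨fun t => ?_, fun t => ?_, by simp, ?_⟩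
  · exact ((hneg t).const_mul c).congr_deriv (by ring)
  · exact (((Real.hasDerivAt_exp t).mul_const x₀).add
      (((Real.hasDerivAt_exp t).sub (hneg t)).const_mul (c / 2))).congr_deriv (by ring)
  · have h1 : Real.exp (a - T) = Real.exp a * Real.exp (-T) := by
      rw [← Real.exp_add, sub_eq_add_neg]
    have h2 : Real.exp (2 * (a - T)) = (Real.exp a * Real.exp (-T)) ^ 2 := by
      rw [← h1, ← Real.exp_nat_mul]; norm_num
    have h3 : Real.exp (-2 * T) = Real.exp (-T) ^ 2 := by
      rw [← Real.exp_nat_mul]; congr 1; push_cast; ring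
    have hinv : Real.exp a * Real.exp (-a) = 1 := by
      rw [← Real.exp_add]; simp
    have hcτ : c * (Real.exp (-T) ^ 2 + 1) = 2 * (Real.exp (-T) - x₀) := by
      rw [hc, h3, div_mul_cancel₀ _ (by positivity)]
    have hD : (Real.exp a * Real.exp (-T)) ^ 2 + 1 ≠ 0 := by positivity
    simp only [hφ, hψ, h1, h2]
    generalize Real.exp a = E at *
    generalize Real.exp (-a) = F at *
    generalize Real.exp (-T) = τ at *
    rw [div_mul_eq_mul_div, ← add_div, eq_div_iff hD]
    linear_combination E * hcτ + c * E * τ ^ 2 * hinv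
end
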